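/- Let H be a pointed Hopf algebra of discrete corepresentation type over an algebraically closed field, let B be the link-indecomposable component of H containing 1, and suppose a ≠ b are grouplike elements such that P(1,a) and P(1,b) contain nontrivial skew primitives. Then the group G(B) of grouplikes of B is generated by a and b and admits the presentation G(B) = ⟨a, b | ab = ba, aᵐ = bⁿ⟩ for some pair of integers (m,n) ≠ ±(1,1). -/

import Mathlib

open TensorProduct



section Basic

variable (K : Type) [CommRing K] (H : Type) [AddCommGroup H] [Module K H] [Coalgebra K H]

/-- A grouplike element of a coalgebra. -/
def IsGrouplike (g : H) : Prop :=
  Coalgebra.counit (R := K) g = 1 ∧ Coalgebra.comul (R := K) g = g ⊗ₜ[K] g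

/-- The space `P(g,h)` of `(g,h)`-skew primitive elements. -/
noncomputable def skewPrim (g h : H) : Submodule K H :=
  LinearMap.ker (Coalgebra.comul (R := K) (A := H)
    - (TensorProduct.mk K H H g + (TensorProduct.mk K H H).flip h))

lemma mem_skewPrim {g h x : H} :
    x ∈ skewPrim K H g h ↔ Coalgebra.comul (R := K) x = g ⊗ₜ[K] x + x ⊗ₜ[K] h := by
  rw [skewPrim, LinearMap.mem_ker, LinearMap.sub_apply, sub_eq_zero, LinearMap.add_apply]
  rfl

/-- A submodule which is a subcoalgebra. -/
def IsSubcoalgebra (D : Submodule K H) : Prop :=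
  ∀ x ∈ D, Coalgebra.comul (R := K) x ∈ LinearMap.range (TensorProduct.map D.subtype D.subtype)

/-- A coalgebra is pointed if every simple subcoalgebra is one-dimensional. -/
def IsPointedCoalgebra : Prop :=
  ∀ D : Submodule K H, IsSubcoalgebra K H D → D ≠ ⊥ →
    (∀ D' : Submodule K H, IsSubcoalgebra K H D' → D' ≤ D → D' = ⊥ ∨ D' = D) →
    Module.finrank K ↥D = 1

end Basic

section Comodules

variable (K : Type) [CommRing K] (H : Type) [AddCommGroup H] [Module K H] [Coalgebra K H]

/-- A (finite or infinite dimensional) right `H`-comodule. -/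
structure Comod where
  carrier : Type
  [acg : AddCommGroup carrier]
  [mod : Module K carrier]
  ρ : carrier →ₗ[K] carrier ⊗[K] H
  counit_comp : ∀ m : carrier,
    (TensorProduct.rid K carrier)
      ((LinearMap.lTensor carrier (Coalgebra.counit (R := K) (A := H))) (ρ m)) = m
  coassoc : ∀ m : carrier,
    (LinearMap.lTensor carrier (Coalgebra.comul (R := K) (A := H))) (ρ m)
      = (TensorProduct.assoc K carrier H H) ((LinearMap.rTensor H ρ) (ρ m))

attribute [instance] Comod.acg Comod.mod

/-- A morphism of right `H`-comodules. -/
structure ComodHom (M N : Comod K H) where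
  toLin : M.carrier →ₗ[K] N.carrier
  compat : ∀ m : M.carrier, N.ρ (toLin m) = (LinearMap.rTensor H toLin) (M.ρ m)

/-- Isomorphism of comodules. -/
def ComodIso (M N : Comod K H) : Prop :=
  ∃ f : ComodHom K H M N, Function.Bijective f.toLin

/-- An indecomposable comodule: it is nonzero, and (equivalently to the usual definition,
since idempotents split in comodule categories) every idempotent endomorphism is `0` or `1`. -/
def Comod.Indec (M : Comod K H) : Prop :=
  (∃ m : M.carrier, m ≠ 0) ∧
    ∀ f : ComodHom K H M M, f.toLin ∘ₗ f.toLin = f.toLin →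
      f.toLin = 0 ∨ f.toLin = LinearMap.id

/-- A submodule of a comodule which is a subcomodule. -/
def IsSubcomod (M : Comod K H) (N : Submodule K M.carrier) : Prop :=
  ∀ m ∈ N, M.ρ m ∈ LinearMap.range (LinearMap.rTensor H N.subtype)

/-- The coaction of `M` factors through the subcoalgebra `D`, i.e. `M` is a `D`-comodule. -/
def CoactsThrough (M : Comod K H) (D : Submodule K H) : Prop :=
  ∀ m : M.carrier, M.ρ m ∈ LinearMap.range (LinearMap.lTensor M.carrier D.subtype)

/-- `M` has dimension vector `d` : it admits a composition series whose successive quotients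
are the one-dimensional comodules associated to grouplike elements, where for every `h` the
grouplike `h` occurs exactly `d h` times. -/
def HasDimVector (M : Comod K H) (d : H → ℕ) : Prop :=
  ∃ (k : ℕ) (F : Fin (k+1) → Submodule K M.carrier) (g : Fin k → H),
    F 0 = ⊥ ∧ F (Fin.last k) = ⊤ ∧
    (∀ i : Fin k, F i.castSucc ≤ F i.succ) ∧
    (∀ i : Fin (k+1), IsSubcomod K H M (F i)) ∧
    (∀ i : Fin k, IsGrouplike K H (g i)) ∧
    (∀ i : Fin k, ∃ m : M.carrier, m ∈ F i.succ ∧ m ∉ F i.castSucc ∧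
        F i.succ = F i.castSucc ⊔ Submodule.span K {m}) ∧
    (∀ i : Fin k, ∀ m ∈ F i.succ,
        M.ρ m - m ⊗ₜ[K] (g i) ∈ LinearMap.range (LinearMap.rTensor H (F i.castSucc).subtype)) ∧
    (∀ h : H, d h = Nat.card {i : Fin k // g i = h})

/-- A pointed coalgebra is of discrete corepresentation type if for every dimension vector `d`
there are only finitely many isomorphism classes of indecomposable comodules with
dimension vector `d`. -/
def DiscreteCorepType : Prop :=
  ∀ d : H → ℕ, ∃ (N : ℕ) (R : Fin N → Comod K H),
    ∀ M : Comod K H, M.Indec K H → HasDimVector K H M d → ∃ i, ComodIso K H M (R i)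

/-- A subcoalgebra `D ≤ H` is of finite corepresentation type: there are only finitely many
isomorphism classes of finite-dimensional indecomposable comodules whose coaction factors
through `D`. -/
def FinCorepTypeOn (D : Submodule K H) : Prop :=
  ∃ (N : ℕ) (R : Fin N → Comod K H),
    ∀ M : Comod K H, M.Indec K H → Module.Finite K M.carrier → CoactsThrough K H M D →
      ∃ i, ComodIso K H M (R i)

/-- A coalgebra is of finite corepresentation type. -/
def FinCorepType : Prop := FinCorepTypeOn K H ⊤

end Comodules

open scoped Classical

section Pointed

variable (K : Type) [CommRing K] (H : Type) [Ring H] [Bialgebra K H]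

/-- `g` is a grouplike element belonging to the subcoalgebra `B`. -/
def grouplikeIn (B : Submodule K H) (g : H) : Prop := IsGrouplike K H g ∧ g ∈ B

/-- In the Ext-quiver of the subcoalgebra `B`, there are exactly `c` arrows from the
grouplike `g` to the grouplike `h` : since the trivial skew primitive `g - h` is nonzero
precisely when `g ≠ h`, this says `dim (P(g,h) ⊓ B) = c + 1` for `g ≠ h`, and
`dim (P(g,g) ⊓ B) = c` for loops. -/
def arrowsEq (B : Submodule K H) (g h : H) (c : ℕ) : Prop :=
  Module.rank K ↥(skewPrim K H g h ⊓ B) = if g = h then (c : Cardinal) else (c : Cardinal) + 1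

/-- The number of arrows from `g` to `h` in the Ext-quiver, as a cardinal: the dimension of
the space of skew primitives modulo the trivial ones. -/
noncomputable def ntRank (g h : H) : Cardinal :=
  Module.rank K
    (↥(skewPrim K H g h) ⧸
      Submodule.comap (skewPrim K H g h).subtype (Submodule.span K {g - h}))

/-- Two grouplikes are linked in `D` if there is a nontrivial skew primitive (in either
direction) between them lying in `D`. -/
def LinkedIn (D : Submodule K H) (g h : H) : Prop :=
  ∃ x ∈ D, (x ∈ skewPrim K H g h ∨ x ∈ skewPrim K H h g) ∧ x ∉ Submodule.span K {g - h}

/-- The Ext-quiver of the subcoalgebra `D` is connected. -/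
def ConnectedOn (D : Submodule K H) : Prop :=
  ∀ g h : H, IsGrouplike K H g → g ∈ D → IsGrouplike K H h → h ∈ D →
    Relation.ReflTransGen (LinkedIn K H D) g h

/-- `B` is the link-indecomposable component containing `1` : a subcoalgebra containing `1`,
maximal with respect to its Ext-quiver being connected. -/
structure IsLIC1 (B : Submodule K H) : Prop where
  subcoalg : IsSubcoalgebra K H B
  one_mem : (1 : H) ∈ B
  connected : ConnectedOn K H B
  maximal : ∀ B' : Submodule K H, IsSubcoalgebra K H B' → ConnectedOn K H B' →
    B ≤ B' → B' = B

end Pointed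

/-- `a^i * a'^(-i)`, i.e. the `i`-th power (for `i : ℤ`) of `a` when `a'` is a two-sided
inverse of `a`. -/
def zp {B : Type} [Monoid B] (a a' : B) (i : ℤ) : B := a ^ i.toNat * a' ^ (-i).toNat

section Hopf

variable (K : Type) [CommRing K] (H : Type) [Ring H] [HopfAlgebra K H]

/-- The antipode applied to an element; for a grouplike `g` this is its inverse `g⁻¹`. -/
noncomputable def inv' (g : H) : H := HopfAlgebra.antipode (R := K) g

/-- The Ext-quiver of the subcoalgebra `B` is the (possibly folded) grid quiver `Q^{m,n}` :
the grouplikes of `B` form the group `⟨a, b | ab = ba, aᵐ = bⁿ⟩`, and at each vertex `g`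
there is exactly one arrow `g → g·a` and one arrow `g → g·b`, and no other arrows. -/
def GridQuiverOn (B : Submodule K H) (a b : H) (m n : ℤ) : Prop :=
  grouplikeIn K H B a ∧ grouplikeIn K H B b ∧ a * b = b * a ∧
  a * inv' K H a = 1 ∧ inv' K H a * a = 1 ∧ b * inv' K H b = 1 ∧ inv' K H b * b = 1 ∧
  (∀ i j : ℤ, zp a (inv' K H a) i * zp b (inv' K H b) j = 1 ↔
      ∃ l : ℤ, i = l * m ∧ j = -(l * n)) ∧
  (∀ g : H, grouplikeIn K H B g ↔
      ∃ i j : ℤ, g = zp a (inv' K H a) i * zp b (inv' K H b) j) ∧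
  (∀ g h : H, grouplikeIn K H B g → grouplikeIn K H B h →
      arrowsEq K H B g h (if h = g * a ∨ h = g * b then 1 else 0))

/-- The Ext-quiver of `B` is a single vertex, and `G(B) = {1}`. -/
def SingleVertexQuiver (B : Submodule K H) : Prop :=
  (∀ g : H, grouplikeIn K H B g ↔ g = 1) ∧ arrowsEq K H B 1 1 0

/-- The Ext-quiver of `B` is a complete oriented cycle, and `G(B) = ⟨a | aⁿ = 1⟩`. -/
def CycleQuiver (B : Submodule K H) : Prop :=
  ∃ (a : H) (nn : ℕ), 0 < nn ∧ grouplikeIn K H B a ∧ a ^ nn = 1 ∧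
    (∀ kk : ℕ, 0 < kk → kk < nn → a ^ kk ≠ 1) ∧
    (∀ g : H, grouplikeIn K H B g ↔ ∃ i : ℕ, g = a ^ i) ∧
    (∀ g h : H, grouplikeIn K H B g → grouplikeIn K H B h →
      arrowsEq K H B g h (if h = g * a then 1 else 0))

/-- The Ext-quiver of `B` is the doubly infinite linear quiver `··· → · → · → ···`, and
`G(B) = ⟨a⟩` is infinite cyclic. -/
def LineQuiver (B : Submodule K H) : Prop :=
  ∃ a : H, grouplikeIn K H B a ∧ (∀ kk : ℕ, 0 < kk → a ^ kk ≠ 1) ∧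
    (∀ g : H, grouplikeIn K H B g ↔ ∃ i j : ℕ, a ^ i * g = a ^ j) ∧
    (∀ g h : H, grouplikeIn K H B g → grouplikeIn K H B h →
      arrowsEq K H B g h (if h = g * a then 1 else 0))

end Hopf

/-!
Nontrivial skew primitives `x i ∈ P(g i, h i)` and `y i ∈ P(g (i + 1), h i)` forming an alternating
cycle of arrows in the Ext-quiver give, for each scalar `t`, an extension of `⨁ K (h i)` by
`⨁ K (g i)` in which the last `y i` is rescaled by `t`. These extensions are indecomposable and
pairwise nonisomorphic, yet they share a dimension vector, so over an infinite field discrete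
corepresentation type forbids such cycles.

In a Hopf algebra the arrows are translates of arrows `1 → c`, which makes cycles easy to produce.
If `ab ≠ ba`, there is a cycle through `1` and `aba⁻¹b⁻¹`; three arrows `1 → a, b, c` give a cycle
through `1`, `ab⁻¹` and `cb⁻¹`; and if `ab⁻¹` has finite order, its powers form a cycle. Hence `a`
and `b` commute, they are the only targets of arrows out of `1`, and the relations `aⁱbʲ = 1` form
a subgroup of `ℤ²` meeting the antidiagonal trivially, which is therefore cyclic. Finally, the
grouplikes of the component of `1` are the subgroup generated by the targets of arrows out of `1`.
-/

section MultiplicativeMatrices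

open Coalgebra LinearMap Matrix Module

variable {K : Type} [CommRing K] {H : Type} [AddCommGroup H] [Module K H] [Coalgebra K H]

/-- Multiplicative matrices, i.e. the matrices of coefficients of comodules with a finite basis
indexed by `ι`. -/
structure IsMultiplicativeMatrix (K : Type) [CommRing K] {H : Type} [AddCommGroup H] [Module K H]
    [Coalgebra K H] {ι : Type} [Fintype ι] [DecidableEq ι] (C : Matrix ι ι H) : Prop where
  counit_apply (p q : ι) : counit (R := K) (C p q) = (1 : Matrix ι ι K) p q
  comul_apply (p q : ι) : comul (R := K) (C p q) = ∑ k, C p k ⊗ₜ[K] C k q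

/-- `F` is the matrix of a comodule morphism from the comodule of `C` to that of `C'`,
i.e. `C' F = F C`; the equation is written entrywise, as the entries of `F` are scalars and those
of `C` and `C'` are vectors. -/
def Intertwines {ι κ : Type} [Fintype ι] [Fintype κ] (F : Matrix κ ι K) (C : Matrix ι ι H)
    (C' : Matrix κ κ H) : Prop :=
  ∀ p q, ∑ k, F k q • C' p k = ∑ k, F p k • C k q

namespace IsMultiplicativeMatrix

variable {ι κ : Type} [Fintype ι] [DecidableEq ι] [Fintype κ] [DecidableEq κ]
  {C : Matrix ι ι H} {C' : Matrix κ κ H}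

/-- The comodule with coaction `e_q ↦ ∑ p, e_p ⊗ C p q` on column vectors. -/
noncomputable abbrev toComod (hC : IsMultiplicativeMatrix K C) : Comod K H where
  carrier := ι → K
  ρ := Fintype.linearCombination K fun q => ∑ p, Pi.single p (1 : K) ⊗ₜ[K] C p q
  counit_comp := by
    refine LinearMap.congr_fun (f := (TensorProduct.rid K (ι → K)).toLinearMap ∘ₗ
      lTensor (ι → K) counit ∘ₗ Fintype.linearCombination K _) (g := LinearMap.id) ?_
    refine (Pi.basisFun K ι).ext fun q => ?_
    simp [Fintype.linearCombination_apply_single, hC.counit_apply, Matrix.one_apply, ite_smul]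
  coassoc := by
    refine LinearMap.congr_fun (f := lTensor (ι → K) comul ∘ₗ Fintype.linearCombination K _)
      (g := (TensorProduct.assoc K (ι → K) H H).toLinearMap ∘ₗ rTensor H _ ∘ₗ
        Fintype.linearCombination K _) ?_
    refine (Pi.basisFun K ι).ext fun q => ?_
    simp only [coe_comp, Function.comp_apply, Pi.basisFun_apply,
      Fintype.linearCombination_apply_single, one_smul, map_sum, lTensor_tmul, rTensor_tmul,
      hC.comul_apply, TensorProduct.tmul_sum, TensorProduct.sum_tmul, LinearEquiv.coe_coe,
      TensorProduct.assoc_tmul]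
    exact Finset.sum_comm

lemma toComod_ρ_single (hC : IsMultiplicativeMatrix K C) (q : ι) :
    hC.toComod.ρ (Pi.single q 1) = ∑ p, Pi.single p (1 : K) ⊗ₜ[K] C p q := by
  simp [Fintype.linearCombination_apply_single]

lemma intertwines_toMatrix' (hC : IsMultiplicativeMatrix K C) (hC' : IsMultiplicativeMatrix K C')
    (f : ComodHom K H hC.toComod hC'.toComod) : Intertwines (toMatrix' f.toLin) C C' := by
  intro p q
  have hf := congrArg ((TensorProduct.lid K H).toLinearMap ∘ₗ
    rTensor H (proj p)) (f.compat (Pi.single q 1))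
  simpa [Fintype.linearCombination_apply, TensorProduct.sum_tmul, TensorProduct.smul_tmul',
    Pi.single_apply, ite_smul] using hf

end IsMultiplicativeMatrix

end MultiplicativeMatrices

section DimensionVector

open LinearMap Module

variable {K : Type} [CommRing K] {H : Type} [AddCommGroup H] [Module K H] [Coalgebra K H]

lemma range_rTensor_subtype_mono {R M : Type*} [CommRing R] [AddCommGroup M] [Module R M]
    (P : Type*) [AddCommGroup P] [Module R P] {N N' : Submodule R M} (h : N ≤ N') :
    range (rTensor P N.subtype) ≤ range (rTensor P N'.subtype) := by
  rw [← Submodule.subtype_comp_inclusion N N' h, rTensor_comp]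
  exact range_comp_le_range _ _

lemma tmul_mem_range_rTensor_subtype {R M P : Type*} [CommRing R] [AddCommGroup M] [Module R M]
    [AddCommGroup P] [Module R P] {N : Submodule R M} {m : M} (hm : m ∈ N) (p : P) :
    m ⊗ₜ[R] p ∈ range (rTensor P N.subtype) :=
  ⟨⟨m, hm⟩ ⊗ₜ p, rfl⟩

lemma hasDimVector_of_basis [Nontrivial K] {M : Comod K H} {k : ℕ} (b : Basis (Fin k) K M.carrier)
    {g : Fin k → H} (hg : ∀ i, IsGrouplike K H (g i))
    (hb : ∀ i, M.ρ (b i) - b i ⊗ₜ g i ∈ range (rTensor H (b.flag i.castSucc).subtype)) :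
    HasDimVector K H M fun h => Nat.card {i // g i = h} := by
  have hsucc (i : Fin k) : b.flag i.succ = b.flag i.castSucc ⊔ K ∙ b i := by
    rw [b.flag_succ, sup_comm]
  have hsub (j : Fin (k + 1)) : IsSubcomod K H M (b.flag j) := by
    intro m hm
    suffices b.flag j ≤ (range (rTensor H (b.flag j).subtype)).comap M.ρ from this hm
    refine b.flag_le_iff.2 fun i hi => ?_
    have hbi : b i ∈ b.flag j := b.self_mem_flag hi
    simpa using Submodule.add_mem _
      (range_rTensor_subtype_mono H (b.flag_mono hi.le) (hb i))
      (tmul_mem_range_rTensor_subtype hbi (g i))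
  refine ⟨k, b.flag, g, b.flag_zero, b.flag_last, fun i => b.flag_mono i.castSucc_le_succ, hsub, hg,
    fun i => ⟨b i, b.self_mem_flag i.castSucc_lt_succ, fun h => ?_, hsucc i⟩, fun i m hm => ?_,
    fun _ => rfl⟩
  · simpa using b.self_mem_flag_iff.1 h
  · rw [hsucc, Submodule.mem_sup] at hm
    obtain ⟨n, hn, _, hc, rfl⟩ := hm
    obtain ⟨c, rfl⟩ := Submodule.mem_span_singleton.1 hc
    have := Submodule.add_mem _ (Submodule.sub_mem _ (hsub _ n hn)
      (tmul_mem_range_rTensor_subtype hn (g i))) (Submodule.smul_mem _ c (hb i))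
    convert this using 1
    simp only [map_add, map_smul, TensorProduct.add_tmul, smul_sub, TensorProduct.smul_tmul']
    abel

end DimensionVector

section BipartiteMatrices

open Coalgebra LinearMap Matrix Submodule

section CommRing

variable {K : Type} [CommRing K] {H : Type} [AddCommGroup H] [Module K H]
  {ι κ : Type} [Fintype ι] [DecidableEq ι] [Fintype κ] [DecidableEq κ]

/-- The matrix of coefficients of an extension of `⨁ j, K (h j)` by `⨁ i, K (g i)`, whose
extension class is given by the skew primitives `W i j ∈ P(g i, h j)`. -/
def bipartiteMatrix (g : ι → H) (W : Matrix ι κ H) (h : κ → H) : Matrix (ι ⊕ κ) (ι ⊕ κ) H :=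
  fromBlocks (diagonal g) W 0 (diagonal h)

variable {g : ι → H} {W W' : Matrix ι κ H} {h : κ → H}

lemma intertwines_bipartiteMatrix_iff {A : Matrix ι ι K} {N : Matrix ι κ K} {Z : Matrix κ ι K}
    {D : Matrix κ κ K} :
    Intertwines (fromBlocks A N Z D) (bipartiteMatrix g W h) (bipartiteMatrix g W' h) ↔
      (∀ i i', A i i' • g i + ∑ j, Z j i' • W' i j = A i i' • g i') ∧
      (∀ j i, Z j i • h j = Z j i • g i) ∧
      (∀ i j, N i j • g i + ∑ j', D j' j • W' i j' = ∑ i', A i i' • W i' j + N i j • h j) ∧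
      (∀ j j', D j j' • h j = ∑ i, Z j i • W i j' + D j j' • h j') := by
  simp [Intertwines, bipartiteMatrix, diagonal_apply, Fintype.sum_sum_type, Sum.forall,
    forall_and, and_assoc, smul_ite]

variable [Coalgebra K H]

lemma counit_smul_eq_zero_of_mem_skewPrim {g h x : H} (hg : counit (R := K) g = 1)
    (hx : x ∈ skewPrim K H g h) : counit (R := K) x • h = 0 := by
  have := congrArg (TensorProduct.lid K H) (rTensor_counit_comul (R := K) x)
  simpa [(mem_skewPrim K H).1 hx, hg] using this

lemma counit_eq_zero_of_mem_skewPrim {g h x : H} (hg : counit (R := K) g = 1)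
    (hh : counit (R := K) h = 1) (hx : x ∈ skewPrim K H g h) : counit (R := K) x = 0 := by
  simpa [hh] using congrArg (counit (R := K)) (counit_smul_eq_zero_of_mem_skewPrim hg hx)

lemma isMultiplicativeMatrix_bipartiteMatrix (hg : ∀ i, IsGrouplike K H (g i))
    (hh : ∀ j, IsGrouplike K H (h j)) (hW : ∀ i j, W i j ∈ skewPrim K H (g i) (h j)) :
    IsMultiplicativeMatrix K (bipartiteMatrix g W h) where
  counit_apply := by
    have hε (i j) := counit_eq_zero_of_mem_skewPrim (hg i).1 (hh j).1 (hW i j)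
    rintro (i | i) (j | j) <;>
      simp [bipartiteMatrix, diagonal_apply, Matrix.one_apply, apply_ite (counit (R := K)),
        (hg _).1, (hh _).1, hε]
  comul_apply := by
    have hΔ (i j) := (mem_skewPrim K H).1 (hW i j)
    rintro (i | i) (j | j) <;>
      simp [bipartiteMatrix, diagonal_apply, ite_tmul, tmul_ite, hΔ]
    · split_ifs with hij <;> simp [hij, (hg j).2]
    · split_ifs with hij <;> simp [hij, (hh j).2]

lemma hasDimVector_toComod_bipartiteMatrix [Nontrivial K] {p q : ℕ} {g : Fin p → H}
    {W : Matrix (Fin p) (Fin q) H} {h : Fin q → H} (hg : ∀ i, IsGrouplike K H (g i))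
    (hh : ∀ j, IsGrouplike K H (h j)) (hC : IsMultiplicativeMatrix K (bipartiteMatrix g W h)) :
    HasDimVector K H hC.toComod fun z => Nat.card {i // Fin.append g h i = z} := by
  let b := (Pi.basisFun K (Fin p ⊕ Fin q)).reindex finSumFinEquiv
  have hb_castAdd (i : Fin p) : b (Fin.castAdd q i) = Pi.single (Sum.inl i) 1 := by
    simp [b, ← finSumFinEquiv_apply_left]
  have hb_natAdd (j : Fin q) : b (Fin.natAdd p j) = Pi.single (Sum.inr j) 1 := by
    simp [b, ← finSumFinEquiv_apply_right]
  refine hasDimVector_of_basis (M := hC.toComod) b ?_ ?_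
  · exact Fin.addCases (by simpa using hg) (by simpa using hh)
  refine Fin.addCases (fun i => ?_) fun j => ?_
  · rw [hb_castAdd, hC.toComod_ρ_single]
    simp [bipartiteMatrix, diagonal_apply, tmul_ite]
  · rw [hb_natAdd, hC.toComod_ρ_single]
    have : ∑ i, Pi.single (Sum.inl i) (1 : K) ⊗ₜ[K] W i j ∈
        range (rTensor H (b.flag (Fin.natAdd p j).castSucc).subtype) :=
      Submodule.sum_mem _ fun i _ => tmul_mem_range_rTensor_subtype
        (hb_castAdd i ▸ b.self_mem_flag (by simp [Fin.lt_def]; omega)) _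
    simpa [bipartiteMatrix, diagonal_apply, tmul_ite] using this

end CommRing

variable {K : Type} [Field K] {H : Type} [AddCommGroup H] [Module K H]
  {ι κ : Type} [Fintype ι] [DecidableEq ι] [Fintype κ] [DecidableEq κ]
  {g : ι → H} {W W' : Matrix ι κ H} {h : κ → H}

lemma Intertwines.exists_eq_fromBlocks_diagonal {F : Matrix (ι ⊕ κ) (ι ⊕ κ) K}
    (hF : Intertwines F (bipartiteMatrix g W h) (bipartiteMatrix g W' h))
    (hg : g.Injective) (hh : h.Injective) (hW' : ∀ j, ∃ i, W' i j ∉ span K {g i - h j}) :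
    ∃ d N e, F = fromBlocks (diagonal d) N 0 (diagonal e) ∧
      ∀ i j, d i • W i j - e j • W' i j ∈ span K {g i - h j} := by
  obtain ⟨A, N, Z, D, rfl⟩ : ∃ A N Z D, F = fromBlocks A N Z D :=
    ⟨_, _, _, _, F.fromBlocks_toBlocks.symm⟩
  obtain ⟨hA, hZ, hN, hD⟩ := intertwines_bipartiteMatrix_iff.1 hF
  have eq_zero {c : K} {u v : H} (huv : u ≠ v) (hc : c • u = c • v) : c = 0 :=
    by_contra fun h0 => huv (smul_right_injective H h0 hc)
  obtain rfl : Z = 0 := by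
    ext j i
    change Z j i = 0
    by_contra hji
    have hgi : h j = g i := of_not_not fun hne => hji (eq_zero hne (hZ j i))
    obtain ⟨i', hi'⟩ := hW' j
    refine hi' ((smul_mem_iff _ hji).1 (mem_span_singleton.2 ⟨- A i' i, ?_⟩))
    have hsum : ∑ j', Z j' i • W' i' j' = Z j i • W' i' j :=
      Fintype.sum_eq_single j fun j' hj' => by
        rw [eq_zero (fun h' => hj' (hh (h'.trans hgi.symm))) (hZ j' i), zero_smul]
    rw [← hsum, hgi, eq_sub_of_add_eq' (hA i' i)]
    module
  have hA_diag : A = diagonal A.diag := by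
    refine (isDiag_iff_diagonal_diag A).1 (fun i i' hii' => eq_zero (hg.ne hii') ?_) |>.symm
    simpa using hA i i'
  have hD_diag : D = diagonal D.diag := by
    refine (isDiag_iff_diagonal_diag D).1 (fun j j' hjj' => eq_zero (hh.ne hjj') ?_) |>.symm
    simpa using hD j j'
  refine ⟨A.diag, N, D.diag, by rw [← hA_diag, ← hD_diag], fun i j => ?_⟩
  have hij : N i j • g i + D.diag j • W' i j = A.diag i • W i j + N i j • h j := by
    have := hN i j
    rw [hA_diag, hD_diag] at this
    simpa [diagonal_apply] using this
  exact mem_span_singleton.2 ⟨N i j, by rwa [smul_sub, sub_eq_sub_iff_add_eq_add]⟩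

end BipartiteMatrices

section AlternatingCycles

open Coalgebra LinearMap Matrix Submodule

section CommRing

variable {K : Type} [CommRing K] {H : Type} [AddCommGroup H] [Module K H] {n : ℕ}
  {x y g h : Fin (n + 2) → H} {c : Fin (n + 2) → K}

/-- The incidence matrix of an alternating cycle: the edges `x j` and `c j • y j` both end at the
`j`-th sink and start at the `j`-th and the `(j + 1)`-st source, indices being taken
modulo `n + 2`. -/
def cycleMatrix (x y : Fin (n + 2) → H) (c : Fin (n + 2) → K) :
    Matrix (Fin (n + 2)) (Fin (n + 2)) H :=
  of fun i j => if i = j then x j else if i = j + 1 then c j • y j else 0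

lemma cycleMatrix_self (j : Fin (n + 2)) : cycleMatrix x y c j j = x j := by
  simp [cycleMatrix]

lemma cycleMatrix_add_one (j : Fin (n + 2)) : cycleMatrix x y c (j + 1) j = c j • y j := by
  simp [cycleMatrix]

/-- The family of weights `1, …, 1, t`, whose product is the isomorphism invariant `t` of the
associated comodule. -/
def cycleWeights (t : K) : Fin (n + 2) → K := Pi.mulSingle (Fin.last _) t

variable [Coalgebra K H] {L M N : Comod K H}

lemma cycleMatrix_mem_skewPrim (hx : ∀ j, x j ∈ skewPrim K H (g j) (h j))
    (hy : ∀ j, y j ∈ skewPrim K H (g (j + 1)) (h j)) (i j) :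
    cycleMatrix x y c i j ∈ skewPrim K H (g i) (h j) := by
  simp only [cycleMatrix, of_apply]
  split_ifs with h₁ h₂
  · exact h₁ ▸ hx j
  · exact h₂ ▸ Submodule.smul_mem _ _ (hy j)
  · exact zero_mem _

lemma ComodIso.symm (h : ComodIso K H M N) : ComodIso K H N M := by
  obtain ⟨f, hf⟩ := h
  let e := LinearEquiv.ofBijective f.toLin hf
  refine ⟨⟨e.symm, fun n => ?_⟩, e.symm.bijective⟩
  obtain ⟨m, rfl⟩ := e.surjective n
  have hcompat : N.ρ (e m) = rTensor H e.toLinearMap (M.ρ m) := f.compat m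
  rw [hcompat, ← rTensor_comp_apply]
  simp

lemma ComodIso.trans (h₁ : ComodIso K H L M) (h₂ : ComodIso K H M N) : ComodIso K H L N := by
  obtain ⟨f, hf⟩ := h₁
  obtain ⟨f', hf'⟩ := h₂
  refine ⟨⟨f'.toLin ∘ₗ f.toLin, fun m => ?_⟩, hf'.comp hf⟩
  rw [LinearMap.comp_apply, f'.compat, f.compat, rTensor_comp_apply]

lemma DiscreteCorepType.exists_ne_comodIso (hH : DiscreteCorepType K H) {T : Type*} [Infinite T]
    {M : T → Comod K H} (hM : ∀ t, (M t).Indec K H) {d : H → ℕ}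
    (hd : ∀ t, HasDimVector K H (M t) d) : ∃ t t', t ≠ t' ∧ ComodIso K H (M t) (M t') := by
  obtain ⟨_, R, hR⟩ := hH d
  choose i hi using fun t => hR (M t) (hM t) (hd t)
  obtain ⟨t, t', hne, htt'⟩ := Finite.exists_ne_map_eq_of_infinite i
  exact ⟨t, t', hne, (hi t).trans (htt' ▸ hi t').symm⟩

end CommRing

lemma eq_zero_or_one_of_isIdempotentElem_fromBlocks {R p q : Type*} [Ring R] [NoZeroDivisors R]
    [Fintype p] [DecidableEq p] [Nonempty p] [Fintype q] [DecidableEq q] {s : R} {N : Matrix p q R}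
    {F : Matrix (p ⊕ q) (p ⊕ q) R} (hF : F = fromBlocks (s • 1) N 0 (s • 1))
    (hF_idem : IsIdempotentElem F) : F = 0 ∨ F = 1 := by
  rw [hF, IsIdempotentElem, fromBlocks_multiply, fromBlocks_inj] at hF_idem
  obtain ⟨hs, hN, -, -⟩ := hF_idem
  have hs : IsIdempotentElem s := by
    inhabit p
    simpa [IsIdempotentElem] using congrFun (congrFun hs default) default
  rcases IsIdempotentElem.iff_eq_zero_or_one.1 hs with rfl | rfl
  · left
    have hN : N = 0 := by simpa [eq_comm] using hN
    simp [hF, hN]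
  · right
    have hN : N = 0 := by simpa using hN
    simp [hF, hN]

variable {K : Type} [Field K] {H : Type} [AddCommGroup H] [Module K H] {n : ℕ}
  {x y g h : Fin (n + 2) → H}

lemma Intertwines.exists_eq_fromBlocks_smul_one {t t' : K}
    {F : Matrix (Fin (n + 2) ⊕ Fin (n + 2)) (Fin (n + 2) ⊕ Fin (n + 2)) K}
    (hF : Intertwines F (bipartiteMatrix g (cycleMatrix x y (cycleWeights t)) h)
      (bipartiteMatrix g (cycleMatrix x y (cycleWeights t')) h))
    (hg : g.Injective) (hh : h.Injective) (hx : ∀ j, x j ∉ span K {g j - h j})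
    (hy : ∀ j, y j ∉ span K {g (j + 1) - h j}) :
    ∃ (s : K) (N : Matrix _ _ K), F = fromBlocks (s • 1) N 0 (s • 1) ∧ s * t = s * t' := by
  obtain ⟨d, N, e, rfl, hde⟩ := hF.exists_eq_fromBlocks_diagonal hg hh
    fun j => ⟨j, by simpa only [cycleMatrix_self] using hx j⟩
  have hd_eq (j) : d j = e j := by
    have := hde j j
    rw [cycleMatrix_self, cycleMatrix_self, ← sub_smul] at this
    exact sub_eq_zero.1 <| of_not_not fun h0 => hx j ((smul_mem_iff _ h0).1 this)
  have hd_succ (j) : d (j + 1) * cycleWeights t j = d j * cycleWeights t' j := by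
    have := hde (j + 1) j
    rw [cycleMatrix_add_one, cycleMatrix_add_one, smul_smul, smul_smul, ← sub_smul,
      ← hd_eq] at this
    exact sub_eq_zero.1 <| of_not_not fun h0 => hy j ((smul_mem_iff _ h0).1 this)
  have hd_const (j) : d j = d 0 := by
    induction j using Fin.induction with
    | zero => rfl
    | succ j ih =>
      simpa [cycleWeights, Fin.coeSucc_eq_succ, j.castSucc_lt_last.ne, ih] using
        hd_succ j.castSucc
  obtain rfl : d = e := funext hd_eq
  refine ⟨d 0, N, ?_, ?_⟩
  · rw [smul_one_eq_diagonal, ← funext hd_const]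
  · simpa [cycleWeights, hd_const (Fin.last _)] using hd_succ (Fin.last _)

variable [Coalgebra K H]

lemma indec_toComod_bipartiteMatrix_cycleMatrix (hg : g.Injective) (hh : h.Injective)
    (hx : ∀ j, x j ∉ span K {g j - h j}) (hy : ∀ j, y j ∉ span K {g (j + 1) - h j}) {t : K}
    (hC : IsMultiplicativeMatrix K
      (bipartiteMatrix g (cycleMatrix x y (cycleWeights t)) h)) :
    hC.toComod.Indec K H := by
  refine ⟨exists_ne (0 : Fin (n + 2) ⊕ Fin (n + 2) → K), fun f hf => ?_⟩
  obtain ⟨s, N, hF, -⟩ :=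
    (hC.intertwines_toMatrix' hC f).exists_eq_fromBlocks_smul_one hg hh hx hy
  have hF_idem : IsIdempotentElem (toMatrix' f.toLin) := by
    rw [IsIdempotentElem, ← toMatrix'_comp, hf]
  refine (eq_zero_or_one_of_isIdempotentElem_fromBlocks hF hF_idem).imp ?_ ?_ <;> intro hf'
  · simpa using hf'
  · exact toMatrix'.injective (hf'.trans toMatrix'_id.symm)

lemma DiscreteCorepType.not_alternating_cycle [Infinite K] (hH : DiscreteCorepType K H)
    (hg_inj : g.Injective) (hh_inj : h.Injective) (hg : ∀ i, IsGrouplike K H (g i))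
    (hh : ∀ j, IsGrouplike K H (h j)) (hx : ∀ j, x j ∈ skewPrim K H (g j) (h j))
    (hx' : ∀ j, x j ∉ span K {g j - h j}) (hy : ∀ j, y j ∈ skewPrim K H (g (j + 1)) (h j))
    (hy' : ∀ j, y j ∉ span K {g (j + 1) - h j}) : False := by
  have hC (t : K) : IsMultiplicativeMatrix K
      (bipartiteMatrix g (cycleMatrix x y (cycleWeights t)) h) :=
    isMultiplicativeMatrix_bipartiteMatrix hg hh (cycleMatrix_mem_skewPrim hx hy)
  obtain ⟨t, t', hne, f, hf⟩ := hH.exists_ne_comodIso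
    (fun t => indec_toComod_bipartiteMatrix_cycleMatrix hg_inj hh_inj hx' hy' (hC t))
    (fun t => hasDimVector_toComod_bipartiteMatrix hg hh (hC t))
  obtain ⟨s, N, hF, hst⟩ :=
    ((hC t).intertwines_toMatrix' (hC t') f).exists_eq_fromBlocks_smul_one hg_inj hh_inj hx' hy'
  have hs : s = 0 := by
    by_contra hs
    exact hne (mul_left_cancel₀ hs hst)
  have hf_single : f.toLin (Pi.single (.inl 0) 1) = 0 := by
    ext p
    change f.toLin (Pi.single (.inl 0) 1) p = (0 : K)
    rw [← toMatrix'_apply, hF, hs]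
    cases p <;> simp
  simpa using hf.injective (hf_single.trans (map_zero _).symm)

end AlternatingCycles

section Arrows

open Coalgebra Submodule

section CommRing

variable {K : Type} [CommRing K] {H : Type} [Ring H] [HopfAlgebra K H]

lemma isGrouplike_iff_isGroupLikeElem {g : H} : IsGrouplike K H g ↔ IsGroupLikeElem K g :=
  ⟨fun h => ⟨h.1, h.2⟩, fun h => ⟨h.1, h.2⟩⟩

lemma isGrouplike_val (g : GroupLike K H) : IsGrouplike K H g.val :=
  isGrouplike_iff_isGroupLikeElem.2 g.2

lemma IsGrouplike.exists_val_eq {g : H} (hg : IsGrouplike K H g) :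
    ∃ g' : GroupLike K H, g'.val = g :=
  ⟨⟨g, isGrouplike_iff_isGroupLikeElem.1 hg⟩, rfl⟩

/-- There is an arrow from the grouplike `g` to `h` in the Ext-quiver, i.e. a nontrivial
`(g, h)`-skew primitive. -/
def HasArrow (g h : GroupLike K H) : Prop :=
  ∃ x ∈ skewPrim K H g.val h.val, x ∉ span K {g.val - h.val}

namespace HasArrow

variable {g h c : GroupLike K H}

lemma mul_left (k : GroupLike K H) (hgh : HasArrow g h) : HasArrow (k * g) (k * h) := by
  obtain ⟨x, hx, hx'⟩ := hgh
  have hk (z : H) : k⁻¹.val * (k.val * z) = z := by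
    rw [← mul_assoc, ← GroupLike.val_mul, inv_mul_cancel, GroupLike.val_one, one_mul]
  refine ⟨k.val * x, ?_, fun hkx => hx' ?_⟩
  · rw [mem_skewPrim] at hx ⊢
    simp [hx, mul_add]
  · simpa [map_span, mul_sub, hk, -GroupLike.val_inv] using
      mem_map_of_mem (f := LinearMap.mulLeft K k⁻¹.val) hkx

lemma mul_right (k : GroupLike K H) (hgh : HasArrow g h) : HasArrow (g * k) (h * k) := by
  obtain ⟨x, hx, hx'⟩ := hgh
  have hk (z : H) : z * k.val * k⁻¹.val = z := by
    rw [mul_assoc, ← GroupLike.val_mul, mul_inv_cancel, GroupLike.val_one, mul_one]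
  refine ⟨x * k.val, ?_, fun hkx => hx' ?_⟩
  · rw [mem_skewPrim] at hx ⊢
    simp [hx, add_mul]
  · simpa [map_span, sub_mul, hk, -GroupLike.val_inv] using
      mem_map_of_mem (f := LinearMap.mulRight K k⁻¹.val) hkx

lemma self_mul (g : GroupLike K H) (hc : HasArrow 1 c) : HasArrow g (g * c) := by
  simpa using hc.mul_left g

lemma one_inv_mul (hgh : HasArrow g h) : HasArrow 1 (g⁻¹ * h) := by
  simpa using hgh.mul_left g⁻¹

lemma conj (k : GroupLike K H) (hc : HasArrow 1 c) : HasArrow 1 (k * c * k⁻¹) := by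
  simpa using (hc.mul_left k).mul_right k⁻¹

end HasArrow

end CommRing

variable {K : Type} [Field K] [Infinite K] {H : Type} [Ring H] [HopfAlgebra K H]
  {a b c : GroupLike K H}

namespace DiscreteCorepType

lemma not_alternating_cycle_hasArrow (hH : DiscreteCorepType K H) {n : ℕ}
    {g h : Fin (n + 2) → GroupLike K H} (hg : g.Injective) (hh : h.Injective)
    (hgh : ∀ i, HasArrow (g i) (h i)) (hgh_succ : ∀ i, HasArrow (g (i + 1)) (h i)) : False := by
  choose x hx hx' using hgh
  choose y hy hy' using hgh_succ
  exact hH.not_alternating_cycle (GroupLike.val_injective.comp hg)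
    (GroupLike.val_injective.comp hh) (fun i => isGrouplike_val (g i))
    (fun i => isGrouplike_val (h i)) hx hx' hy hy'

lemma commute_of_hasArrow (hH : DiscreteCorepType K H) (hab : a ≠ b) (ha : HasArrow 1 a)
    (hb : HasArrow 1 b) : Commute a b := by
  by_contra hne
  refine hH.not_alternating_cycle_hasArrow (g := ![1, a * b * a⁻¹ * b⁻¹]) (h := ![a, a * b * a⁻¹])
    ?_ ?_ (Fin.forall_fin_two.2 ⟨ha, ?_⟩) (Fin.forall_fin_two.2 ⟨?_, hb.conj a⟩)
  · rw [injective_pair_iff_ne]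
    rwa [ne_comm, Ne, mul_inv_eq_one, mul_inv_eq_iff_eq_mul]
  · rw [injective_pair_iff_ne]
    simpa [eq_mul_inv_iff_mul_eq] using hab
  · simpa using hb.self_mul (a * b * a⁻¹ * b⁻¹)
  · simpa [mul_assoc] using (ha.conj b).self_mul (a * b * a⁻¹ * b⁻¹)

lemma eq_or_eq_of_hasArrow (hH : DiscreteCorepType K H) (hab : a ≠ b) (ha : HasArrow 1 a)
    (hb : HasArrow 1 b) (hc : HasArrow 1 c) : c = a ∨ c = b := by
  by_contra! ⟨hca, hcb⟩
  have comm_ca := hH.commute_of_hasArrow hca hc ha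
  have comm_cb := hH.commute_of_hasArrow hcb hc hb
  have comm_ab := hH.commute_of_hasArrow hab ha hb
  have hmid : c * b⁻¹ * a = a * b⁻¹ * c := by
    rw [(comm_ca.mul_left comm_ab.symm.inv_left).eq, comm_cb.inv_right.eq, mul_assoc]
  refine hH.not_alternating_cycle_hasArrow (g := ![1, a * b⁻¹, c * b⁻¹]) (h := ![a, a * b⁻¹ * c, c])
    ?_ ?_ (fun i => ?_) (fun i => ?_)
  · rw [← List.nodup_ofFn]
    simp [eq_comm, mul_inv_eq_one, hab, hcb.symm, hca.symm]
  · have hmid_ne_a : a * b⁻¹ * c ≠ a := by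
      simpa [mul_assoc, inv_mul_eq_one] using hcb.symm
    have hmid_ne_c : a * b⁻¹ * c ≠ c := by
      simpa [mul_inv_eq_one] using hab
    rw [← List.nodup_ofFn]
    simp [hmid_ne_a.symm, hmid_ne_c, hca.symm]
  · fin_cases i
    · exact ha
    · exact hc.self_mul (a * b⁻¹)
    · simpa using hb.self_mul (c * b⁻¹)
  · fin_cases i
    · simpa using hb.self_mul (a * b⁻¹)
    · simpa [hmid] using ha.self_mul (c * b⁻¹)
    · exact hc

lemma not_isOfFinOrder_of_hasArrow (hH : DiscreteCorepType K H) (hab : a ≠ b)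
    (ha : HasArrow 1 a) (hb : HasArrow 1 b) : ¬ IsOfFinOrder (a * b⁻¹) := by
  intro hfin
  have hpos := hfin.orderOf_pos
  have hne_one : orderOf (a * b⁻¹) ≠ 1 := by rwa [Ne, orderOf_eq_one_iff, mul_inv_eq_one]
  obtain ⟨n, hn⟩ : ∃ n, orderOf (a * b⁻¹) = n + 2 := ⟨orderOf (a * b⁻¹) - 2, by omega⟩
  have hinj : Function.Injective fun i : Fin (n + 2) => (a * b⁻¹) ^ i.val := fun i j hij =>
    Fin.ext (pow_injOn_Iio_orderOf (i.isLt.trans_eq hn.symm) (j.isLt.trans_eq hn.symm) hij)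
  refine hH.not_alternating_cycle_hasArrow hinj
    (h := fun i => (a * b⁻¹) ^ i.val * a) (fun i j hij => hinj (mul_right_cancel hij)) (fun i => ?_)
    (fun i => ?_)
  · exact ha.self_mul _
  · have hsucc : (a * b⁻¹) ^ (i + 1).val = (a * b⁻¹) ^ (i.val + 1) := by
      rw [pow_inj_mod, hn, Fin.val_add]
      simp
    simpa [hsucc, pow_succ, mul_assoc] using hb.self_mul ((a * b⁻¹) ^ (i + 1).val)

end DiscreteCorepType

end Arrows

section Groups

variable {G : Type*} [Group G] {a b : G}

/-- The homomorphism `(i, j) ↦ a ^ i * b ^ j` from the free abelian group of rank two to a group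
with commuting elements `a` and `b`. -/
def zpowMulZpowHom (hab : Commute a b) : Multiplicative ℤ × Multiplicative ℤ →* G :=
  (zpowersHom G a).noncommCoprod (zpowersHom G b) fun i j => by
    simpa only [zpowersHom_apply] using hab.zpow_zpow i.toAdd j.toAdd

lemma zpowMulZpowHom_ofAdd (hab : Commute a b) (i j : ℤ) :
    zpowMulZpowHom hab (.ofAdd i, .ofAdd j) = a ^ i * b ^ j :=
  rfl

lemma mem_closure_pair_iff_of_commute (hab : Commute a b) {g : G} :
    g ∈ Subgroup.closure {a, b} ↔ ∃ i j : ℤ, g = a ^ i * b ^ j := by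
  have hrange : (zpowMulZpowHom hab).range = Subgroup.closure {a, b} := by
    rw [zpowMulZpowHom, MonoidHom.noncommCoprod_range, Set.insert_eq, Subgroup.closure_union,
      ← Subgroup.zpowers_eq_closure, ← Subgroup.zpowers_eq_closure]
    rfl
  simp only [← hrange, MonoidHom.mem_range, Prod.exists, Multiplicative.exists,
    zpowMulZpowHom_ofAdd, eq_comm]

lemma eq_zero_of_zpow_mul_zpow_neg_eq_one (hab : Commute a b) (hord : ¬ IsOfFinOrder (a * b⁻¹))
    {i : ℤ} (hi : a ^ i * b ^ (-i) = 1) : i = 0 := by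
  by_contra h0
  refine hord (isOfFinOrder_iff_zpow_eq_one.2 ⟨i, h0, ?_⟩)
  rw [hab.inv_right.mul_zpow, inv_zpow', hi]

lemma exists_forall_zpow_mul_zpow_eq_one_iff (hab : Commute a b)
    (hord : ¬ IsOfFinOrder (a * b⁻¹)) :
    ∃ m n : ℤ, (m, n) ≠ (1, 1) ∧ (m, n) ≠ (-1, -1) ∧
      ∀ i j : ℤ, a ^ i * b ^ j = 1 ↔ ∃ l : ℤ, i = l * m ∧ j = -(l * n) := by
  let R := (zpowMulZpowHom hab).ker
  let σ : R →* Multiplicative ℤ := mulMonoidHom.comp R.subtype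
  have hσ : Function.Injective σ := by
    rw [injective_iff_map_eq_one]
    rintro ⟨⟨i, j⟩, hij⟩ hσij
    obtain rfl : j = i⁻¹ := (inv_eq_of_mul_eq_one_right hσij).symm
    have hi : i.toAdd = 0 := eq_zero_of_zpow_mul_zpow_neg_eq_one hab hord hij
    obtain rfl : i = 1 := hi
    rfl
  have := isCyclic_of_injective σ hσ
  obtain ⟨⟨⟨m, n⟩, hmn⟩, hgen⟩ := IsCyclic.exists_generator (α := R)
  have hrel (i j : ℤ) :
      a ^ i * b ^ j = 1 ↔ ∃ l : ℤ, i = l * m.toAdd ∧ j = -(l * -n.toAdd) := by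
    calc a ^ i * b ^ j = 1
      _ ↔ (.ofAdd i, .ofAdd j) ∈ R := Iff.rfl
      _ ↔ ∃ l : ℤ, (m, n) ^ l = (.ofAdd i, .ofAdd j) :=
        ⟨fun h => (hgen ⟨_, h⟩).imp fun l hl => congrArg Subtype.val hl,
          fun ⟨l, hl⟩ => hl ▸ zpow_mem hmn l⟩
      _ ↔ ∃ l : ℤ, i = l * m.toAdd ∧ j = -(l * -n.toAdd) := by
        simp only [Prod.pow_mk, Prod.mk.injEq, mul_neg, neg_neg]
        exact exists_congr fun l => and_congr eq_comm eq_comm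
  have hne (l : ℤ) : ¬(1 = l * m.toAdd ∧ -1 = -(l * -n.toAdd)) := fun h => by
    have hone : a * b⁻¹ = 1 := by simpa using (hrel 1 (-1)).2 ⟨l, h⟩
    exact hord (hone ▸ .one)
  refine ⟨m.toAdd, -n.toAdd, fun h => hne 1 ?_, fun h => hne (-1) ?_, hrel⟩ <;>
    simp_all

end Groups

section Subcoalgebras

open Coalgebra LinearMap Submodule

section CommRing

variable {K : Type} [CommRing K] {H : Type} [AddCommGroup H] [Module K H] [Coalgebra K H]
  {D E : Submodule K H} {g h k x : H}

/-- The operator `x ↦ f(x₁) x₂` by which a functional `f` acts on a coalgebra. -/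
noncomputable def dualAct (f : Module.Dual K H) : H →ₗ[K] H :=
  (TensorProduct.lid K H).toLinearMap ∘ₗ rTensor H f ∘ₗ comul

lemma IsGrouplike.dualAct_apply (hk : IsGrouplike K H k) (f : Module.Dual K H) :
    dualAct f k = f k • k := by
  simp [dualAct, hk.2]

namespace IsSubcoalgebra

lemma exists_dualAct_eq (hD : IsSubcoalgebra K H D) (hx : x ∈ D) (f : Module.Dual K H) :
    ∃ w : D ⊗[K] D, dualAct f x = TensorProduct.lid K D (rTensor D (f.domRestrict D) w) := by
  obtain ⟨w, hw⟩ := hD x hx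
  refine ⟨w, ?_⟩
  rw [dualAct, comp_apply, comp_apply, ← hw]
  clear hw
  induction w with
  | zero => simp
  | tmul d e => simp
  | add w w' ih ih' => simp_all

lemma dualAct_mem (hD : IsSubcoalgebra K H D) (hx : x ∈ D) (f : Module.Dual K H) :
    dualAct f x ∈ D := by
  obtain ⟨w, hw⟩ := hD.exists_dualAct_eq hx f
  exact hw ▸ SetLike.coe_mem _

lemma dualAct_eq_zero (hD : IsSubcoalgebra K H D) (hx : x ∈ D) {f : Module.Dual K H}
    (hf : D ≤ ker f) : dualAct f x = 0 := by
  obtain ⟨w, hw⟩ := hD.exists_dualAct_eq hx f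
  have hf' : f.domRestrict D = 0 := by
    ext d
    exact hf d.2
  simpa [hf'] using hw

lemma sup (hD : IsSubcoalgebra K H D) (hE : IsSubcoalgebra K H E) :
    IsSubcoalgebra K H (D ⊔ E) := by
  intro x hx
  obtain ⟨d, hd, e, he, rfl⟩ := mem_sup.1 hx
  rw [map_add]
  exact add_mem (TensorProduct.range_mapIncl_mono le_sup_left le_sup_left (hD d hd))
    (TensorProduct.range_mapIncl_mono le_sup_right le_sup_right (hE e he))

end IsSubcoalgebra

lemma IsGrouplike.eq_of_mem_span_singleton (hk : IsGrouplike K H k) (hg : IsGrouplike K H g)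
    (hkg : k ∈ span K {g}) : k = g := by
  obtain ⟨c, rfl⟩ := mem_span_singleton.1 hkg
  have hc : c = 1 := by simpa [hg.1] using hk.1
  rw [hc, one_smul]

lemma isSubcoalgebra_span {s : Set H}
    (hs : ∀ x ∈ s, comul (R := K) x ∈
      range (TensorProduct.mapIncl (span K s) (span K s))) :
    IsSubcoalgebra K H (span K s) :=
  fun _ hx => span_le (p := (range _).comap comul).2 hs hx

lemma isSubcoalgebra_span_singleton (hg : IsGrouplike K H g) :
    IsSubcoalgebra K H (span K {g}) := by
  have hg_mem := mem_span_singleton_self (R := K) g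
  refine isSubcoalgebra_span fun x hx => ?_
  rw [Set.mem_singleton_iff.1 hx, hg.2]
  exact ⟨⟨g, hg_mem⟩ ⊗ₜ ⟨g, hg_mem⟩, rfl⟩

lemma isSubcoalgebra_span_triple (hg : IsGrouplike K H g) (hh : IsGrouplike K H h)
    (hx : x ∈ skewPrim K H g h) : IsSubcoalgebra K H (span K {g, h, x}) := by
  have hmem {u v} (hu : u ∈ ({g, h, x} : Set H)) (hv : v ∈ ({g, h, x} : Set H)) :
      u ⊗ₜ[K] v ∈ range (TensorProduct.mapIncl (span K {g, h, x}) (span K {g, h, x})) :=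
    ⟨⟨u, subset_span hu⟩ ⊗ₜ ⟨v, subset_span hv⟩, rfl⟩
  refine isSubcoalgebra_span ?_
  rintro _ (rfl | rfl | rfl)
  · exact hg.2 ▸ hmem (by simp) (by simp)
  · exact hh.2 ▸ hmem (by simp) (by simp)
  · exact (mem_skewPrim K H).1 hx ▸ add_mem (hmem (by simp) (by simp)) (hmem (by simp) (by simp))

lemma tmul_comul_sub_eq_of_mem_skewPrim (hx : x ∈ skewPrim K H g h) :
    x ⊗ₜ[K] (comul (R := K) h - h ⊗ₜ[K] h) =
      TensorProduct.assoc K H H H ((comul (R := K) g - g ⊗ₜ[K] g) ⊗ₜ[K] x) := by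
  have hassoc := coassoc_apply (R := K) x
  simp only [(mem_skewPrim K H).1 hx, map_add, rTensor_tmul, lTensor_tmul, TensorProduct.add_tmul,
    TensorProduct.tmul_add, TensorProduct.assoc_tmul] at hassoc
  rw [TensorProduct.tmul_sub, TensorProduct.sub_tmul, map_sub, TensorProduct.assoc_tmul,
    sub_eq_sub_iff_add_eq_add, ← add_right_inj (g ⊗ₜ[K] (x ⊗ₜ[K] h))]
  convert hassoc.symm using 1 <;> abel

end CommRing

variable {K : Type} [Field K] {H : Type} [AddCommGroup H] [Module K H]

lemma tmul_eq_zero_iff {V W : Type*} [AddCommGroup V] [Module K V] [AddCommGroup W] [Module K W]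
    {v : V} {w : W} : v ⊗ₜ[K] w = 0 ↔ v = 0 ∨ w = 0 := by
  refine ⟨fun h => ?_, by rintro (rfl | rfl) <;> simp⟩
  by_contra! ⟨hv, hw⟩
  obtain ⟨f, hf⟩ : ∃ f : Module.Dual K V, f v ≠ 0 := by
    simpa using (Module.forall_dual_apply_eq_zero_iff K v).not.2 hv
  obtain ⟨e, he⟩ : ∃ e : Module.Dual K W, e w ≠ 0 := by
    simpa using (Module.forall_dual_apply_eq_zero_iff K w).not.2 hw
  simpa [hf, he] using congrArg (TensorProduct.lid K K ∘ TensorProduct.map f e) h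

variable [Coalgebra K H] {D E : Submodule K H} {g h k x : H}

lemma isGrouplike_of_comul_eq_tmul_self (hg : comul (R := K) g = g ⊗ₜ[K] g) (hg_ne : g ≠ 0) :
    IsGrouplike K H g := by
  refine ⟨smul_left_injective K hg_ne ?_, hg⟩
  simpa [hg] using congrArg (TensorProduct.lid K H) (rTensor_counit_comul (R := K) g)

namespace IsGrouplike

lemma mem_or_mem_of_mem_sup (hk : IsGrouplike K H k) (hD : IsSubcoalgebra K H D)
    (hE : IsSubcoalgebra K H E) (hkDE : k ∈ D ⊔ E) : k ∈ D ∨ k ∈ E := by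
  refine or_iff_not_imp_left.2 fun hkD => ?_
  obtain ⟨f, hfk, hf⟩ := exists_le_ker_of_notMem hkD
  obtain ⟨d, hd, e, he, rfl⟩ := mem_sup.1 hkDE
  rw [← smul_mem_iff E hfk, ← hk.dualAct_apply, map_add, hD.dualAct_eq_zero hd hf, zero_add]
  exact hE.dualAct_mem he f

lemma eq_or_eq_of_mem_span_triple (hk : IsGrouplike K H k) (hg : IsGrouplike K H g)
    (hh : IsGrouplike K H h) (hx : x ∈ skewPrim K H g h) (hkx : k ∈ span K {g, h, x}) :
    k = g ∨ k = h := by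
  have hD := (isSubcoalgebra_span_singleton hg).sup (isSubcoalgebra_span_singleton hh)
  suffices hkD : k ∈ span K {g} ⊔ span K {h} from
    (hk.mem_or_mem_of_mem_sup (isSubcoalgebra_span_singleton hg)
      (isSubcoalgebra_span_singleton hh) hkD).imp (hk.eq_of_mem_span_singleton hg)
      (hk.eq_of_mem_span_singleton hh)
  by_contra hkD
  obtain ⟨f, hfk, hf⟩ := exists_le_ker_of_notMem hkD
  have hfg : f g = 0 := hf (mem_sup_left (mem_span_singleton_self g))
  have hx_act : dualAct f x = f x • h := by
    simp [dualAct, (mem_skewPrim K H).1 hx, hfg]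
  rw [span_insert, span_insert, ← sup_assoc] at hkx
  obtain ⟨d, hd, y, hy, rfl⟩ := mem_sup.1 hkx
  obtain ⟨c, rfl⟩ := mem_span_singleton.1 hy
  refine hkD ((smul_mem_iff _ hfk).1 ?_)
  rw [← hk.dualAct_apply, map_add, hD.dualAct_eq_zero hd hf, zero_add, map_smul, hx_act]
  exact smul_mem _ _ (smul_mem _ _ (mem_sup_right (mem_span_singleton_self h)))

lemma right_of_mem_skewPrim (hg : IsGrouplike K H g) (hx : x ∈ skewPrim K H g h)
    (hx' : x ∉ span K {g - h}) : IsGrouplike K H h := by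
  refine isGrouplike_of_comul_eq_tmul_self ?_ ?_
  · have hx_ne : x ≠ 0 := fun h0 => hx' (h0 ▸ zero_mem _)
    have hxh := tmul_comul_sub_eq_of_mem_skewPrim hx
    rw [hg.2, sub_self, TensorProduct.zero_tmul, map_zero, tmul_eq_zero_iff] at hxh
    exact sub_eq_zero.1 (hxh.resolve_left hx_ne)
  · rintro rfl
    refine hx' (mem_span_singleton.2 ⟨counit (R := K) x, ?_⟩)
    simpa [(mem_skewPrim K H).1 hx] using
      congrArg (TensorProduct.rid K H) (lTensor_counit_comul (R := K) x)

lemma left_of_mem_skewPrim (hh : IsGrouplike K H h) (hx : x ∈ skewPrim K H g h)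
    (hx' : x ∉ span K {g - h}) : IsGrouplike K H g := by
  refine isGrouplike_of_comul_eq_tmul_self ?_ ?_
  · have hx_ne : x ≠ 0 := fun h0 => hx' (h0 ▸ zero_mem _)
    have hxg := tmul_comul_sub_eq_of_mem_skewPrim hx
    rw [hh.2, sub_self, TensorProduct.tmul_zero, eq_comm, LinearEquiv.map_eq_zero_iff,
      tmul_eq_zero_iff] at hxg
    exact sub_eq_zero.1 (hxg.resolve_right hx_ne)
  · rintro rfl
    refine hx' (mem_span_singleton.2 ⟨-counit (R := K) x, ?_⟩)
    simpa [(mem_skewPrim K H).1 hx] using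
      congrArg (TensorProduct.lid K H) (rTensor_counit_comul (R := K) x)

end IsGrouplike

end Subcoalgebras

section Components

open Submodule Relation

namespace LinkedIn

variable {K : Type} [CommRing K] {H : Type} [Ring H] [Bialgebra K H] {D E : Submodule K H}
  {g h : H}

protected lemma symm (hgh : LinkedIn K H D g h) : LinkedIn K H D h g := by
  obtain ⟨x, hxD, hx, hx'⟩ := hgh
  exact ⟨x, hxD, hx.symm, by rwa [← neg_sub, ← Set.neg_singleton, span_neg]⟩

lemma mono (hDE : D ≤ E) (hgh : LinkedIn K H D g h) : LinkedIn K H E g h :=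
  let ⟨x, hxD, hx⟩ := hgh
  ⟨x, hDE hxD, hx⟩

end LinkedIn

lemma connectedOn_of_forall_reflTransGen {K : Type} [CommRing K] {H : Type} [Ring H]
    [Bialgebra K H] {D : Submodule K H} {u : H}
    (hu : ∀ k, IsGrouplike K H k → k ∈ D → ReflTransGen (LinkedIn K H D) u k) :
    ConnectedOn K H D := by
  have : Std.Symm (LinkedIn K H D) := ⟨fun _ _ hgh => hgh.symm⟩
  exact fun g h hg hgD hh hhD => (ReflTransGen.stdSymm.symm _ _ (hu g hg hgD)).trans (hu h hh hhD)

lemma IsLIC1.mem_of_linkedIn {K : Type} [Field K] {H : Type} [Ring H] [Bialgebra K H]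
    {B : Submodule K H} {u v : H} (hB : IsLIC1 K H B) (hu : IsGrouplike K H u)
    (hv : IsGrouplike K H v) (huB : u ∈ B) (huv : LinkedIn K H ⊤ u v) : v ∈ B := by
  obtain ⟨z, -, hz, hz'⟩ := huv
  obtain ⟨E, hE, hvE, hzE, hE_grouplike⟩ : ∃ E : Submodule K H, IsSubcoalgebra K H E ∧ v ∈ E ∧
      z ∈ E ∧ ∀ k ∈ E, IsGrouplike K H k → k = u ∨ k = v := by
    rcases hz with hz | hz
    · exact ⟨span K {u, v, z}, isSubcoalgebra_span_triple hu hv hz, subset_span (by simp),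
        subset_span (by simp), fun k hkE hk => hk.eq_or_eq_of_mem_span_triple hu hv hz hkE⟩
    · exact ⟨span K {v, u, z}, isSubcoalgebra_span_triple hv hu hz, subset_span (by simp),
        subset_span (by simp), fun k hkE hk => (hk.eq_or_eq_of_mem_span_triple hv hu hz hkE).symm⟩
  have huv : LinkedIn K H (B ⊔ E) u v := ⟨z, mem_sup_right hzE, hz, hz'⟩
  have hreach_of_mem {k : H} (hk : IsGrouplike K H k) (hkB : k ∈ B) :
      ReflTransGen (LinkedIn K H (B ⊔ E)) u k :=
    ReflTransGen.mono (fun _ _ => LinkedIn.mono le_sup_left) _ _ (hB.connected u k hu huB hk hkB)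
  have hconn : ConnectedOn K H (B ⊔ E) := by
    refine connectedOn_of_forall_reflTransGen (u := u) fun k hk hkBE => ?_
    rcases hk.mem_or_mem_of_mem_sup hB.subcoalg hE hkBE with hkB | hkE
    · exact hreach_of_mem hk hkB
    · obtain rfl | rfl := hE_grouplike k hkE hk
      · exact .refl
      · exact .single huv
  rw [← hB.maximal _ (hB.subcoalg.sup hE) hconn le_sup_left]
  exact mem_sup_right hvE

lemma HasArrow.linkedIn_top {K : Type} [CommRing K] {H : Type} [Ring H] [HopfAlgebra K H]
    {g h : GroupLike K H} (hgh : HasArrow g h) : LinkedIn K H ⊤ g.val h.val :=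
  let ⟨x, hx, hx'⟩ := hgh
  ⟨x, mem_top, .inl hx, hx'⟩

variable {K : Type} [Field K] {H : Type} [Ring H] [HopfAlgebra K H] {g h : GroupLike K H}

lemma LinkedIn.exists_hasArrow {D : Submodule K H} {k : H} (hgk : LinkedIn K H D g.val k) :
    ∃ h : GroupLike K H, h.val = k ∧ (HasArrow g h ∨ HasArrow h g) := by
  have hg := isGrouplike_val g
  obtain ⟨x, -, hx | hx, hx'⟩ := hgk
  · obtain ⟨h, rfl⟩ := (hg.right_of_mem_skewPrim hx hx').exists_val_eq
    exact ⟨h, rfl, .inl ⟨x, hx, hx'⟩⟩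
  · rw [← neg_sub, ← Set.neg_singleton, span_neg] at hx'
    obtain ⟨h, rfl⟩ := (hg.left_of_mem_skewPrim hx hx').exists_val_eq
    exact ⟨h, rfl, .inr ⟨x, hx, hx'⟩⟩

namespace IsLIC1

variable {B : Submodule K H}

lemma val_mem_iff_of_hasArrow (hB : IsLIC1 K H B) (hgh : HasArrow g h) :
    g.val ∈ B ↔ h.val ∈ B :=
  ⟨fun hg => hB.mem_of_linkedIn (isGrouplike_val g) (isGrouplike_val h) hg hgh.linkedIn_top,
    fun hh => hB.mem_of_linkedIn (isGrouplike_val h) (isGrouplike_val g) hh hgh.linkedIn_top.symm⟩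

lemma val_mem_of_mem_closure (hB : IsLIC1 K H B)
    (hg : g ∈ Subgroup.closure {c : GroupLike K H | HasArrow 1 c}) : g.val ∈ B := by
  induction hg using Subgroup.closure_induction_right with
  | one => exact hB.one_mem
  | mul_right k _ c hc ih => exact (hB.val_mem_iff_of_hasArrow (hc.self_mul k)).1 ih
  | mul_inv_cancel k _ c hc ih =>
    exact (hB.val_mem_iff_of_hasArrow (by simpa using hc.self_mul (k * c⁻¹))).2 ih

lemma exists_mem_closure_of_reflTransGen {k : H}
    (hk : ReflTransGen (LinkedIn K H B) 1 k) :
    ∃ g ∈ Subgroup.closure {c : GroupLike K H | HasArrow 1 c}, g.val = k := by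
  induction hk with
  | refl => exact ⟨1, Subgroup.one_mem _, rfl⟩
  | tail _ hlink ih =>
    obtain ⟨g, hg, rfl⟩ := ih
    obtain ⟨h, rfl, hgh | hhg⟩ := hlink.exists_hasArrow
    · refine ⟨h, ?_, rfl⟩
      exact (mul_mem_cancel_left (inv_mem hg)).1 (Subgroup.subset_closure hgh.one_inv_mul)
    · refine ⟨h, ?_, rfl⟩
      exact inv_mem_iff.1 ((mul_mem_cancel_right hg).1 (Subgroup.subset_closure hhg.one_inv_mul))

lemma grouplikeIn_iff (hB : IsLIC1 K H B) {k : H} :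
    grouplikeIn K H B k ↔
      ∃ g ∈ Subgroup.closure {c : GroupLike K H | HasArrow 1 c}, g.val = k := by
  constructor
  · exact fun ⟨hk, hkB⟩ => exists_mem_closure_of_reflTransGen
      (hB.connected 1 k (isGrouplike_val 1) hB.one_mem hk hkB)
  · rintro ⟨g, hg, rfl⟩
    exact ⟨isGrouplike_val g, hB.val_mem_of_mem_closure hg⟩

end IsLIC1

end Components

lemma zp_val_inv' {K : Type} [CommRing K] {H : Type} [Ring H] [HopfAlgebra K H]
    (g : GroupLike K H) (i : ℤ) : zp g.val (inv' K H g.val) i = (g ^ i).val := by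
  change g.val ^ i.toNat * g⁻¹.val ^ (-i).toNat = _
  rw [← GroupLike.val_pow, ← GroupLike.val_pow, ← GroupLike.val_mul, ← zpow_natCast,
    ← zpow_natCast, inv_zpow', ← zpow_add]
  congr 2
  omega

theorem grouplikes_of_LIC_presentation_general
    (K : Type) [Field K] [Infinite K]
    (H : Type) [Ring H] [HopfAlgebra K H]
    (hdiscrete : DiscreteCorepType K H)
    (B : Submodule K H) (hB : IsLIC1 K H B)
    (a b : H) (hab : a ≠ b) (ha : IsGrouplike K H a) (hb : IsGrouplike K H b)
    (x y : H)
    (hx : x ∈ skewPrim K H 1 a) (hx' : x ∉ Submodule.span K {(1 : H) - a})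
    (hy : y ∈ skewPrim K H 1 b) (hy' : y ∉ Submodule.span K {(1 : H) - b}) :
    ∃ m n : ℤ, ((m, n) : ℤ × ℤ) ≠ (1, 1) ∧ ((m, n) : ℤ × ℤ) ≠ (-1, -1) ∧
      grouplikeIn K H B a ∧ grouplikeIn K H B b ∧ a * b = b * a ∧
      a * inv' K H a = 1 ∧ inv' K H a * a = 1 ∧ b * inv' K H b = 1 ∧ inv' K H b * b = 1 ∧
      (∀ i j : ℤ, zp a (inv' K H a) i * zp b (inv' K H b) j = 1 ↔
          ∃ l : ℤ, i = l * m ∧ j = -(l * n)) ∧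
      (∀ g : H, grouplikeIn K H B g ↔
          ∃ i j : ℤ, g = zp a (inv' K H a) i * zp b (inv' K H b) j) := by
  obtain ⟨a, rfl⟩ := ha.exists_val_eq
  obtain ⟨b, rfl⟩ := hb.exists_val_eq
  have hab : a ≠ b := ne_of_apply_ne _ hab
  have arrow_a : HasArrow 1 a := ⟨x, hx, hx'⟩
  have arrow_b : HasArrow 1 b := ⟨y, hy, hy'⟩
  have hcomm : Commute a b := hdiscrete.commute_of_hasArrow hab arrow_a arrow_b
  have hord : ¬ IsOfFinOrder (a * b⁻¹) :=
    hdiscrete.not_isOfFinOrder_of_hasArrow hab arrow_a arrow_b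
  have harrows : {c : GroupLike K H | HasArrow 1 c} = {a, b} := Set.ext fun c =>
    ⟨hdiscrete.eq_or_eq_of_hasArrow hab arrow_a arrow_b, by rintro (rfl | rfl) <;> assumption⟩
  have hgen (k : H) : grouplikeIn K H B k ↔ ∃ i j : ℤ, k = (a ^ i * b ^ j).val := by
    simp_rw [hB.grouplikeIn_iff, harrows, mem_closure_pair_iff_of_commute hcomm]
    aesop
  obtain ⟨m, n, hmn, hmn', hrel⟩ := exists_forall_zpow_mul_zpow_eq_one_iff hcomm hord
  simp only [zp_val_inv', ← GroupLike.val_mul]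
  refine ⟨m, n, hmn, hmn', (hgen _).2 ⟨1, 0, by simp⟩, (hgen _).2 ⟨0, 1, by simp⟩,
    congrArg GroupLike.val hcomm.eq, congrArg GroupLike.val (mul_inv_cancel a),
    congrArg GroupLike.val (inv_mul_cancel a), congrArg GroupLike.val (mul_inv_cancel b),
    congrArg GroupLike.val (inv_mul_cancel b), fun i j => ?_, hgen⟩
  rw [← hrel i j, ← GroupLike.val_one (R := K), GroupLike.val_inj]

theorem grouplikes_of_LIC_presentation
    (K : Type) [Field K] [IsAlgClosed K]
    (H : Type) [Ring H] [HopfAlgebra K H]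
    (hpointed : IsPointedCoalgebra K H) (hdiscrete : DiscreteCorepType K H)
    (B : Submodule K H) (hB : IsLIC1 K H B)
    (a b : H) (hab : a ≠ b) (ha : IsGrouplike K H a) (hb : IsGrouplike K H b)
    (x y : H)
    (hx : x ∈ skewPrim K H 1 a) (hx' : x ∉ Submodule.span K {(1 : H) - a})
    (hy : y ∈ skewPrim K H 1 b) (hy' : y ∉ Submodule.span K {(1 : H) - b}) :
    ∃ m n : ℤ, ((m, n) : ℤ × ℤ) ≠ (1, 1) ∧ ((m, n) : ℤ × ℤ) ≠ (-1, -1) ∧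
      grouplikeIn K H B a ∧ grouplikeIn K H B b ∧ a * b = b * a ∧
      a * inv' K H a = 1 ∧ inv' K H a * a = 1 ∧ b * inv' K H b = 1 ∧ inv' K H b * b = 1 ∧
      -- the only relations among `a` and `b` are those generated by `ab = ba, aᵐ = bⁿ`
      (∀ i j : ℤ, zp a (inv' K H a) i * zp b (inv' K H b) j = 1 ↔
          ∃ l : ℤ, i = l * m ∧ j = -(l * n)) ∧
      -- `G(B)` is generated by `a` and `b`
      (∀ g : H, grouplikeIn K H B g ↔
          ∃ i j : ℤ, g = zp a (inv' K H a) i * zp b (inv' K H b) j) :=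
  grouplikes_of_LIC_presentation_general K H hdiscrete B hB a b hab ha hb x y hx hx' hy hy'
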